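/- Let δ > 0 be sufficiently small, let ζ, φ ∈ X_δ, let ρ₀ be a bounded measurable axisymmetric function on ℝ³, even in x₃, supported in B̄₁, and let k ∈ C²(ℝ). Then the linear map T : X → X defined by (Tη)(x) = L⁻¹[ (ρ₀ ∘ g_ζ⁻¹) · (k' ∘ φ ∘ g_ζ⁻¹) · (η ∘ g_ζ⁻¹) ](g_ζ(x)), x ∈ B̄₁, is well defined and bounded: there exists a constant C > 0 depending only on ‖ρ₀‖_{L∞}, k and δ such that ‖Tη‖_X ≤ C‖η‖_X for every η ∈ X. -/

import Mathlib

noncomputable section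

open MeasureTheory Metric Set Filter

/-- ℝ³ with the Euclidean norm. -/
abbrev E3 := EuclideanSpace ℝ (Fin 3)
/-- ℝ⁵ with the Euclidean norm. -/
abbrev E5 := EuclideanSpace ℝ (Fin 5)

/-- Build a vector of ℝ³ from its coordinates. -/
def mk3 (a b c : ℝ) : E3 := (WithLp.equiv 2 (Fin 3 → ℝ)).symm ![a, b, c]
/-- Build a vector of ℝ⁵ from its coordinates. -/
def mk5 (a b c d e : ℝ) : E5 := (WithLp.equiv 2 (Fin 5 → ℝ)).symm ![a, b, c, d, e]

/-- The cylindrical radius r = √(x₁² + x₂²). -/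
def cylRad (x : E3) : ℝ := Real.sqrt ((x 0)^2 + (x 1)^2)

/-- The reflection (x₁, x₂, x₃) ↦ (x₁, x₂, −x₃). -/
def reflect3 (x : E3) : E3 := mk3 (x 0) (x 1) (-(x 2))

/-- Axisymmetric: a function of (r, x₃) only. -/
def Axisym (f : E3 → ℝ) : Prop := ∃ F : ℝ → ℝ → ℝ, ∀ x, f x = F (cylRad x) (x 2)

/-- Even in x₃. -/
def EvenZ (f : E3 → ℝ) : Prop := ∀ x, f (reflect3 x) = f x

/-- Five-dimensional extension of an axisymmetric function on ℝ³. -/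
def tilde (f : E3 → ℝ) (y : E5) : ℝ :=
  f (mk3 (Real.sqrt ((y 0)^2 + (y 1)^2 + (y 2)^2 + (y 3)^2)) 0 (y 4))

/-- The embedding (x₁,x₂,x₃) ↦ (x₁,x₂,0,0,x₃) of ℝ³ into ℝ⁵. -/
def emb (x : E3) : E5 := mk5 (x 0) (x 1) 0 0 (x 2)

/-- The operator L⁻¹, given by
(L⁻¹f)(x) = C₅ (x₁²+x₂²) ∫_{ℝ⁵} |(x₁,x₂,0,0,x₃) − y|⁻³ f̃(y) dy. -/
def Linv (C₅ : ℝ) (f : E3 → ℝ) (x : E3) : ℝ :=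
  C₅ * ((x 0)^2 + (x 1)^2) * ∫ y : E5, (‖emb x - y‖ ^ 3)⁻¹ * tilde f y

/-- The gradient of a function on the closed unit ball B̄₁ ⊂ ℝ³. -/
def gradB (f : E3 → ℝ) (x : E3) : E3 →L[ℝ] ℝ :=
  fderivWithin ℝ f (closedBall (0:E3) 1) x

/-- Membership in the space X: C¹ on B̄₁, axisymmetric, even in x₃, vanishing at the
origin, and with finite norm ‖f‖_X = sup_{0<|x|≤1} |∇f(x)|/|x|. -/
def InX (f : E3 → ℝ) : Prop :=
  ContDiffOn ℝ 1 f (closedBall (0:E3) 1) ∧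
  (∃ F : ℝ → ℝ → ℝ, ∀ x ∈ closedBall (0:E3) 1, f x = F (cylRad x) (x 2)) ∧
  (∀ x ∈ closedBall (0:E3) 1, f (reflect3 x) = f x) ∧
  f 0 = 0 ∧
  (∃ M : ℝ, ∀ x ∈ closedBall (0:E3) 1, ‖gradB f x‖ ≤ M * ‖x‖)

/-- ‖f‖_X ≤ M, expressed pointwise: |∇f(x)| ≤ M|x| on B̄₁. -/
def XnormLe (f : E3 → ℝ) (M : ℝ) : Prop :=
  ∀ x ∈ closedBall (0:E3) 1, ‖gradB f x‖ ≤ M * ‖x‖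

/-- Membership in X_δ, for a function extended to all of ℝ³ preserving axisymmetry,
evenness in x₃ and the X-bound ‖∇ζ(x)‖ ≤ δ|x|. -/
def InXext (δ : ℝ) (ζ : E3 → ℝ) : Prop :=
  ContDiff ℝ 1 ζ ∧ Axisym ζ ∧ EvenZ ζ ∧ ζ 0 = 0 ∧ ∀ x : E3, ‖fderiv ℝ ζ x‖ ≤ δ * ‖x‖

/-- The deformation g_ζ(x) = x (1 + ζ(x)/|x|²). -/
def gdef (ζ : E3 → ℝ) (x : E3) : E3 := (1 + ζ x / ‖x‖^2) • x

/-- The inverse deformation g_ζ⁻¹. -/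
def ginv (ζ : E3 → ℝ) : E3 → E3 := Function.invFun (gdef ζ)

open scoped Topology

/-- regularised kernel -/
def Kr (ε : ℝ) (z : E5) : ℝ := (‖z‖ ^ 2 + ε) ^ (-(3/2) : ℝ)
/-- its derivative -/
def Dr (ε : ℝ) (z : E5) : E5 →L[ℝ] ℝ := (-3 * (‖z‖ ^ 2 + ε) ^ (-(5/2) : ℝ)) • innerSL ℝ z

lemma Kr_zero (z : E5) : Kr 0 z = (‖z‖ ^ 3)⁻¹ := by
  unfold Kr
  rw [add_zero, ← Real.rpow_natCast, ← Real.rpow_mul (norm_nonneg z), ← Real.rpow_natCast,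
    ← Real.rpow_neg (norm_nonneg z)]
  norm_num

lemma Kr_hasFDerivAt {ε : ℝ} (hε : 0 < ε) (z : E5) : HasFDerivAt (Kr ε) (Dr ε z) z := by
  have h1 : HasFDerivAt (fun z : E5 => ‖z‖ ^ 2 + ε) (2 • (innerSL ℝ z)) z :=
    ((hasStrictFDerivAt_norm_sq z).hasFDerivAt).add_const ε
  have h2 := h1.rpow_const (p := (-(3/2) : ℝ)) (Or.inl (by positivity))
  have e : Dr ε z = ((-(3/2) : ℝ) * (‖z‖ ^ 2 + ε) ^ ((-(3/2) : ℝ) - 1)) • (2 • (innerSL ℝ z)) := by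
    unfold Dr
    ext v
    simp only [smul_apply, smul_eq_mul, nsmul_eq_mul]
    norm_num
    ring
  rw [e]; exact h2

lemma rpow52 {t : ℝ} (ht : 0 ≤ t) : (t ^ 2) ^ (-(5/2) : ℝ) * t = (t ^ 4)⁻¹ := by
  rcases ht.eq_or_lt with h | h
  · subst h; simp
  · rw [← Real.rpow_natCast, ← Real.rpow_mul ht]
    nth_rewrite 2 [← Real.rpow_one t]
    rw [← Real.rpow_add h, ← Real.rpow_natCast, ← Real.rpow_neg ht]
    norm_num

lemma Dr_norm_eq (ε : ℝ) (hε : 0 ≤ ε) (z : E5) :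
    ‖Dr ε z‖ = 3 * ((‖z‖ ^ 2 + ε) ^ (-(5/2) : ℝ) * ‖z‖) := by
  unfold Dr
  rw [norm_smul, innerSL_apply_norm, norm_mul, Real.norm_of_nonneg (by positivity : (0:ℝ) ≤ (‖z‖ ^ 2 + ε) ^ (-(5/2) : ℝ))]
  norm_num
  ring

lemma Dr_norm_le {ε : ℝ} (hε : 0 ≤ ε) (z : E5) : ‖Dr ε z‖ ≤ 3 * (‖z‖ ^ 4)⁻¹ := by
  rw [Dr_norm_eq ε hε, ← rpow52 (norm_nonneg z)]
  rcases eq_or_ne z 0 with h | h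
  · subst h; simp
  · have : 0 < ‖z‖ := norm_pos_iff.2 h
    gcongr 3 * (?_ * _)
    apply Real.rpow_le_rpow_of_nonpos (by positivity) (by linarith) (by norm_num)

lemma Dr_norm_le' {ε : ℝ} (hε : 0 < ε) (z : E5) : ‖Dr ε z‖ ≤ 3 * (√ε ^ 4)⁻¹ := by
  rw [Dr_norm_eq ε hε.le]
  have h0 : 0 < √(‖z‖ ^ 2 + ε) := Real.sqrt_pos.2 (by positivity)
  have h1 : ‖z‖ ≤ √(‖z‖ ^ 2 + ε) := Real.le_sqrt_of_sq_le (by linarith)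
  have h2 : (‖z‖ ^ 2 + ε) = √(‖z‖ ^ 2 + ε) ^ 2 := (Real.sq_sqrt (by positivity)).symm
  have h3 : √ε ≤ √(‖z‖ ^ 2 + ε) := Real.sqrt_le_sqrt (by nlinarith [norm_nonneg z])
  have h4 : 0 < √ε := Real.sqrt_pos.2 hε
  calc 3 * ((‖z‖ ^ 2 + ε) ^ (-(5/2) : ℝ) * ‖z‖)
      ≤ 3 * ((‖z‖ ^ 2 + ε) ^ (-(5/2) : ℝ) * √(‖z‖ ^ 2 + ε)) := by gcongr
    _ = 3 * ((√(‖z‖ ^ 2 + ε)) ^ 4)⁻¹ := by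
        rw [← rpow52 h0.le, ← h2]
    _ ≤ _ := by gcongr

lemma Kr_norm_le {ε : ℝ} (hε : 0 ≤ ε) {z : E5} (h : z ≠ 0) : ‖Kr ε z‖ ≤ (‖z‖ ^ 3)⁻¹ := by
  rw [← Kr_zero]
  unfold Kr
  have : 0 < ‖z‖ := norm_pos_iff.2 h
  rw [Real.norm_of_nonneg (by positivity)]
  apply Real.rpow_le_rpow_of_nonpos (by positivity) (by linarith) (by norm_num)

lemma intOn (n : ℕ) (hn : n ≤ 4) : IntegrableOn (fun z : E5 => (‖z‖ ^ n)⁻¹) (ball 0 4) := by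
  rw [integrableOn_fun_norm_addHaar volume (f := fun t => (t ^ n)⁻¹)]
  have : IntegrableOn (fun y : ℝ => y ^ (4 - n)) (Ioo 0 4) :=
    ((continuous_pow _).integrableOn_Icc (a := 0) (b := 4)).mono_set Ioo_subset_Icc_self
  refine this.congr_fun ?_ measurableSet_Ioo
  intro y hy
  have hy0 : y ≠ 0 := hy.1.ne'
  simp only [finrank_euclideanSpace, Fintype.card_fin, smul_eq_mul]
  rw [show 5 - 1 = (4 - n) + n by omega, pow_add]
  field_simp

lemma Kr_meas (ε : ℝ) : Measurable (Kr ε) := by unfold Kr; fun_prop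
lemma Dr_meas (ε : ℝ) : Measurable (Dr ε) := by
  unfold Dr
  have : Measurable (fun z : E5 => -3 * (‖z‖ ^ 2 + ε) ^ (-(5/2) : ℝ)) := by fun_prop
  exact this.smul (innerSL ℝ (E := E5)).continuous.measurable

lemma ae_ne0 : ∀ᵐ z : E5 ∂(volume.restrict (ball (0:E5) 4)), z ≠ 0 := by
  have : ∀ᵐ z : E5 ∂volume, z ≠ 0 := by simp [ae_iff]
  exact ae_restrict_of_ae this

lemma Kr_int {ε : ℝ} (hε : 0 ≤ ε) : IntegrableOn (Kr ε) (ball 0 4) :=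
  (intOn 3 (by norm_num)).mono' (Kr_meas ε).aestronglyMeasurable
    (ae_ne0.mono fun _ hz => Kr_norm_le hε hz)

lemma Dr_int {ε : ℝ} (hε : 0 ≤ ε) : IntegrableOn (Dr ε) (ball 0 4) :=
  ((intOn 4 (by norm_num)).const_mul 3).mono' (Dr_meas ε).aestronglyMeasurable
    (Eventually.of_forall fun z => Dr_norm_le hε z)

/-- sequence -/
def es (n : ℕ) : ℝ := 1 / ((n : ℝ) + 1)
lemma es_pos (n : ℕ) : 0 < es n := by unfold es; positivity
lemma es_lim : Tendsto es atTop (𝓝 0) := tendsto_one_div_add_atTop_nhds_zero_nat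

lemma rp_lim (p : ℝ) {z : E5} (hz : z ≠ 0) :
    Tendsto (fun n => (‖z‖ ^ 2 + es n) ^ p) atTop (𝓝 ((‖z‖ ^ 2 + 0) ^ p)) := by
  have : 0 < ‖z‖ := norm_pos_iff.2 hz
  exact (tendsto_const_nhds.add es_lim).rpow_const (Or.inl (by positivity))

lemma K_lim : Tendsto (fun n => ∫ z in ball (0:E5) 4, ‖Kr (es n) z - Kr 0 z‖) atTop (𝓝 0) := by
  have := tendsto_integral_of_dominated_convergence
    (μ := volume.restrict (ball (0:E5) 4)) (F := fun n z => ‖Kr (es n) z - Kr 0 z‖)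
    (f := fun _ => (0:ℝ)) (fun z => 2 * (‖z‖ ^ 3)⁻¹)
    (fun n => ((Kr_meas _).sub (Kr_meas _)).norm.aestronglyMeasurable)
    ((intOn 3 (by norm_num)).const_mul 2)
    (fun n => ae_ne0.mono fun z hz => by
      have h1 := norm_sub_le (Kr (es n) z) (Kr 0 z)
      have h2 := Kr_norm_le (es_pos n).le hz
      have h3 := Kr_norm_le le_rfl hz
      rw [norm_norm]; linarith)
    (ae_ne0.mono fun z hz => by
      have : Tendsto (fun n => Kr (es n) z) atTop (𝓝 (Kr 0 z)) := rp_lim _ hz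
      simpa using (this.sub_const (Kr 0 z)).norm)
  simpa using this

lemma D_lim : Tendsto (fun n => ∫ z in ball (0:E5) 4, ‖Dr (es n) z - Dr 0 z‖) atTop (𝓝 0) := by
  have := tendsto_integral_of_dominated_convergence
    (μ := volume.restrict (ball (0:E5) 4)) (F := fun n z => ‖Dr (es n) z - Dr 0 z‖)
    (f := fun _ => (0:ℝ)) (fun z => 2 * (3 * (‖z‖ ^ 4)⁻¹))
    (fun n => ((Dr_meas _).sub (Dr_meas _)).norm.aestronglyMeasurable)
    (((intOn 4 (by norm_num)).const_mul 3).const_mul 2)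
    (fun n => ae_ne0.mono fun z hz => by
      have h1 := norm_sub_le (Dr (es n) z) (Dr 0 z)
      have h2 := Dr_norm_le (es_pos n).le z
      have h3 := Dr_norm_le le_rfl z
      rw [norm_norm]; linarith)
    (ae_ne0.mono fun z hz => by
      have : Tendsto (fun n => Dr (es n) z) atTop (𝓝 (Dr 0 z)) :=
        ((rp_lim _ hz).const_mul (-3)).smul_const _
      simpa using (this.sub_const (Dr 0 z)).norm)
  simpa using this

section conv
variable {F : Type*} [NormedAddCommGroup F] [NormedSpace ℝ F]

lemma conv_aux {h : E5 → ℝ} {A : ℝ} (hA : ∀ y, |h y| ≤ A) (hs : ∀ y, 2 < ‖y‖ → h y = 0)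
    (hm : AEStronglyMeasurable h) {K : E5 → F} (hK : IntegrableOn K (ball 0 4))
    {X : E5} (hX : X ∈ ball (0:E5) 2) :
    Integrable (fun y => h y • K (X - y)) ∧
      ‖∫ y, h y • K (X - y)‖ ≤ A * ∫ z in ball (0:E5) 4, ‖K z‖ := by
  have hA0 : 0 ≤ A := (abs_nonneg _).trans (hA 0)
  set K1 : E5 → F := (ball (0:E5) 4).indicator K with hK1
  have hi : Integrable K1 := hK.integrable_indicator measurableSet_ball
  have heq : (fun y => h y • K (X - y)) = fun y => h y • K1 (X - y) := by
    funext y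
    by_cases hy : 2 < ‖y‖
    · simp [hs y hy]
    · have : X - y ∈ ball (0:E5) 4 := by
        rw [mem_ball_zero_iff] at hX ⊢
        have := norm_sub_le X y
        linarith
      rw [hK1, indicator_of_mem this]
  have hi2 : Integrable (fun y => K1 (X - y)) := hi.comp_sub_left X
  have hi3 : Integrable (fun y => h y • K1 (X - y)) :=
    hi2.bdd_smul A hm (Eventually.of_forall hA)
  rw [heq]
  refine ⟨hi3, ?_⟩
  calc ‖∫ y, h y • K1 (X - y)‖ ≤ ∫ y, A * ‖K1 (X - y)‖ := by
        apply norm_integral_le_of_norm_le (hi2.norm.const_mul A)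
        refine Eventually.of_forall fun y => ?_
        rw [norm_smul]
        exact mul_le_mul_of_nonneg_right (hA y) (norm_nonneg _)
    _ = A * ∫ y, ‖K1 y‖ := by
        rw [integral_const_mul, integral_sub_left_eq_self (fun y => ‖K1 y‖)]
    _ = _ := by
        rw [← integral_indicator measurableSet_ball]
        simp only [hK1, norm_indicator_eq_indicator_norm]

end conv

/-- constants -/
def J3 : ℝ := ∫ z in ball (0:E5) 4, ‖Kr 0 z‖
/-- constants -/
def J4 : ℝ := ∫ z in ball (0:E5) 4, ‖Dr 0 z‖
lemma J3_nn : 0 ≤ J3 := integral_nonneg fun _ => norm_nonneg _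
lemma J4_nn : 0 ≤ J4 := integral_nonneg fun _ => norm_nonneg _

lemma conv_unif {F : Type*} [NormedAddCommGroup F] [NormedSpace ℝ F]
    {h : E5 → ℝ} {A : ℝ} (hA : ∀ y, |h y| ≤ A) (hs : ∀ y, 2 < ‖y‖ → h y = 0)
    (hm : AEStronglyMeasurable h) {K : ℕ → E5 → F} {K0 : E5 → F}
    (hK : ∀ n, IntegrableOn (K n) (ball 0 4)) (hK0 : IntegrableOn K0 (ball 0 4))
    (hl : Tendsto (fun n => ∫ z in ball (0:E5) 4, ‖K n z - K0 z‖) atTop (𝓝 0)) :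
    TendstoUniformlyOn (fun n X => ∫ y, h y • K n (X - y)) (fun X => ∫ y, h y • K0 (X - y))
      atTop (ball (0:E5) 2) := by
  rw [Metric.tendstoUniformlyOn_iff]
  intro e he
  have h2 : Tendsto (fun n => A * ∫ z in ball (0:E5) 4, ‖K n z - K0 z‖) atTop (𝓝 0) := by
    simpa using hl.const_mul A
  filter_upwards [h2.eventually (gt_mem_nhds he)] with n hn X hX
  refine lt_of_le_of_lt ?_ hn
  rw [dist_comm, dist_eq_norm, ← integral_sub (conv_aux hA hs hm (hK n) hX).1
    (conv_aux hA hs hm hK0 hX).1]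
  simp only [← smul_sub]
  exact (conv_aux hA hs hm ((hK n).sub hK0) hX).2

lemma pot (h : E5 → ℝ) (A : ℝ) (hA : ∀ y, |h y| ≤ A) (hs : ∀ y, 2 < ‖y‖ → h y = 0) :
    ∃ G : E5 → (E5 →L[ℝ] ℝ), ContinuousOn G (ball 0 2) ∧ ∀ X ∈ ball (0:E5) 2,
      HasFDerivAt (fun X => ∫ y : E5, (‖X - y‖ ^ 3)⁻¹ * h y) (G X) X ∧
      |∫ y : E5, (‖X - y‖ ^ 3)⁻¹ * h y| ≤ A * J3 ∧ ‖G X‖ ≤ A * J4 := by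
  have hA0 : 0 ≤ A := (abs_nonneg _).trans (hA 0)
  by_cases hm : AEStronglyMeasurable h
  swap
  · have hz : ∀ X : E5, ∫ y : E5, (‖X - y‖ ^ 3)⁻¹ * h y = 0 := by
      intro X
      apply integral_non_aestronglyMeasurable
      intro hc
      apply hm
      have h1 : AEStronglyMeasurable (fun y : E5 => ‖X - y‖ ^ 3) volume := by
        apply Continuous.aestronglyMeasurable; fun_prop
      refine (h1.mul hc).congr ?_
      have : ∀ᵐ y : E5 ∂volume, y ≠ X := by simp [ae_iff]
      filter_upwards [this] with y hy
      have : ‖X - y‖ ≠ 0 := norm_ne_zero_iff.2 (sub_ne_zero.2 hy.symm)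
      simp only [Pi.mul_apply]
      field_simp
    simp only [hz]
    refine ⟨fun _ => 0, continuousOn_const, fun X _ => ⟨hasFDerivAt_const _ _, ?_, ?_⟩⟩
    · simpa using mul_nonneg hA0 J3_nn
    · simpa using mul_nonneg hA0 J4_nn
  have hP : (fun X => ∫ y : E5, (‖X - y‖ ^ 3)⁻¹ * h y) = fun X => ∫ y, h y • Kr 0 (X - y) := by
    funext X
    simp only [Kr_zero, smul_eq_mul, mul_comm]
  have hhi : Integrable h := by
    have : IntegrableOn h (closedBall 0 2) := by
      refine Integrable.mono' (g := fun _ => A) (integrableOn_const measure_closedBall_lt_top.ne) hm.restrict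
        (Eventually.of_forall hA)
    rwa [integrableOn_iff_integrable_of_support_subset] at this
    intro y hy
    rw [mem_closedBall_zero_iff]
    by_contra hc
    exact hy (hs y (not_le.1 hc))
  have hder : ∀ n, ∀ X ∈ ball (0:E5) 2, HasFDerivAt (fun X => ∫ y, h y • Kr (es n) (X - y))
      (∫ y, h y • Dr (es n) (X - y)) X := by
    intro n X hX
    refine hasFDerivAt_integral_of_dominated_of_fderiv_le
      (F := fun X y => h y • Kr (es n) (X - y)) (F' := fun X y => h y • Dr (es n) (X - y))
      (bound := fun y => |h y| * (3 * (√(es n) ^ 4)⁻¹))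
      (isOpen_ball.mem_nhds hX) ?_ ?_ ?_ ?_ ?_ ?_
    · filter_upwards [isOpen_ball.mem_nhds hX] with Z hZ
      exact (conv_aux hA hs hm (Kr_int (es_pos n).le) hZ).1.aestronglyMeasurable
    · exact (conv_aux hA hs hm (Kr_int (es_pos n).le) hX).1
    · exact (conv_aux hA hs hm (Dr_int (es_pos n).le) hX).1.aestronglyMeasurable
    · refine Eventually.of_forall fun y Z _ => ?_
      rw [norm_smul]
      exact mul_le_mul_of_nonneg_left (Dr_norm_le' (es_pos n) _) (norm_nonneg _)
    · exact hhi.abs.mul_const _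
    · refine Eventually.of_forall fun y Z _ => ?_
      have := (Kr_hasFDerivAt (es_pos n) (Z - y)).comp Z ((hasFDerivAt_id Z).sub_const y)
      exact this.const_smul (h y)
  have hcont : ∀ n, ContinuousOn (fun X => ∫ y, h y • Dr (es n) (X - y)) (ball (0:E5) 2) := by
    intro n X hX
    have hc : Continuous (Dr (es n)) := by
      unfold Dr
      have hp := es_pos n
      have h1 : Continuous fun z : E5 => (‖z‖ ^ 2 + es n) ^ (-(5/2) : ℝ) :=
        Continuous.rpow_const (by fun_prop) fun z => Or.inl (by positivity)
      fun_prop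
    apply ContinuousAt.continuousWithinAt
    refine continuousAt_of_dominated (bound := fun y => |h y| * (3 * (√(es n) ^ 4)⁻¹)) ?_ ?_ ?_ ?_
    · filter_upwards [isOpen_ball.mem_nhds hX] with Z hZ
      exact (conv_aux hA hs hm (Dr_int (es_pos n).le) hZ).1.aestronglyMeasurable
    · refine Eventually.of_forall fun Z => Eventually.of_forall fun y => ?_
      rw [norm_smul]
      exact mul_le_mul_of_nonneg_left (Dr_norm_le' (es_pos n) _) (norm_nonneg _)
    · exact hhi.abs.mul_const _
    · refine Eventually.of_forall fun y => ?_
      apply Continuous.continuousAt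
      fun_prop
  have hDu := conv_unif hA hs hm (fun n => Dr_int (es_pos n).le) (Dr_int le_rfl) D_lim
  have hKu := conv_unif hA hs hm (fun n => Kr_int (es_pos n).le) (Kr_int le_rfl) K_lim
  refine ⟨fun X => ∫ y, h y • Dr 0 (X - y), hDu.continuousOn (Frequently.of_forall hcont),
    fun X hX => ⟨?_, ?_, ?_⟩⟩
  · rw [hP]
    exact hasFDerivAt_of_tendstoUniformlyOn isOpen_ball hDu hder
      (fun x hx => hKu.tendsto_at hx) hX
  · rw [show (∫ y : E5, (‖X - y‖ ^ 3)⁻¹ * h y) = _ from congrFun hP X]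
    exact (conv_aux hA hs hm (Kr_int le_rfl) hX).2
  · exact (conv_aux hA hs hm (Dr_int le_rfl) hX).2

lemma c1_of {E F : Type*} [NormedAddCommGroup E] [NormedSpace ℝ E] [NormedAddCommGroup F]
    [NormedSpace ℝ F] {f : E → F} {f' : E → E →L[ℝ] F} {s : Set E} (hs : IsOpen s)
    (h : ∀ x ∈ s, HasFDerivAt f (f' x) x) (hc : ContinuousOn f' s) : ContDiffOn ℝ 1 f s := by
  rw [show (1 : WithTop ℕ∞) = 0 + 1 by norm_num, contDiffOn_succ_iff_fderiv_of_isOpen hs]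
  refine ⟨fun x hx => (h x hx).differentiableAt.differentiableWithinAt, by simp, ?_⟩
  rw [contDiffOn_zero]
  exact hc.congr fun x hx => (h x hx).fderiv

lemma mk3_0 (a b c : ℝ) : mk3 a b c 0 = a := rfl
lemma mk3_1 (a b c : ℝ) : mk3 a b c 1 = b := rfl
lemma mk3_2 (a b c : ℝ) : mk3 a b c 2 = c := rfl
lemma nsq3 (x : E3) : ‖x‖ ^ 2 = x 0 ^ 2 + x 1 ^ 2 + x 2 ^ 2 := by
  rw [EuclideanSpace.real_norm_sq_eq, Fin.sum_univ_three]
lemma nsq5 (x : E5) : ‖x‖ ^ 2 = x 0 ^ 2 + x 1 ^ 2 + x 2 ^ 2 + x 3 ^ 2 + x 4 ^ 2 := by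
  rw [EuclideanSpace.real_norm_sq_eq, Fin.sum_univ_five]
lemma emb_0 (x : E3) : emb x 0 = x 0 := rfl
lemma emb_1 (x : E3) : emb x 1 = x 1 := rfl
lemma emb_2 (x : E3) : emb x 2 = 0 := rfl
lemma emb_3 (x : E3) : emb x 3 = 0 := rfl
lemma emb_4 (x : E3) : emb x 4 = x 2 := rfl
lemma emb_norm (x : E3) : ‖emb x‖ = ‖x‖ := by
  rw [← sq_eq_sq₀ (norm_nonneg _) (norm_nonneg _), nsq3, nsq5, emb_0, emb_1, emb_2, emb_3, emb_4]
  ring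

lemma ext5 {x y : E5} (h0 : x 0 = y 0) (h1 : x 1 = y 1) (h2 : x 2 = y 2) (h3 : x 3 = y 3)
    (h4 : x 4 = y 4) : x = y := by
  ext i; fin_cases i <;> assumption
lemma ext3 {x y : E3} (h0 : x 0 = y 0) (h1 : x 1 = y 1) (h2 : x 2 = y 2) : x = y := by
  ext i; fin_cases i <;> assumption

/-- emb as a linear isometry -/
def embL : E3 →ₗᵢ[ℝ] E5 where
  toFun := emb
  map_add' x y := by
    apply ext5 <;> simp [emb_0, emb_1, emb_2, emb_3, emb_4]
  map_smul' c x := by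
    apply ext5 <;> simp [emb_0, emb_1, emb_2, emb_3, emb_4]
  norm_map' := emb_norm

lemma embL_apply (x : E3) : embL x = emb x := rfl

lemma coord_le (x : E3) (i : Fin 3) : |x i| ≤ ‖x‖ := PiLp.norm_apply_le x i

lemma r2_le (x : E3) : x 0 ^ 2 + x 1 ^ 2 ≤ ‖x‖ ^ 2 := by
  rw [nsq3]; nlinarith [sq_nonneg (x 2)]

lemma linv_reg_aux {C₅ : ℝ} (hC : 0 < C₅) (p q : ℝ) (hp0 : 0 ≤ p) (hq0 : 0 ≤ q) (P : E5 → ℝ)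
    (G : E5 → (E5 →L[ℝ] ℝ)) (x : E3) (hx : ‖x‖ < 2) (hG : HasFDerivAt P (G (emb x)) (emb x))
    (hb1 : |P (emb x)| ≤ p) (hb2 : ‖G (emb x)‖ ≤ q) :
    |C₅ * (x 0 ^ 2 + x 1 ^ 2) * P (emb x)| ≤ C₅ * p * ‖x‖ ^ 2 ∧
      ‖fderiv ℝ (fun x => C₅ * (x 0 ^ 2 + x 1 ^ 2) * P (emb x)) x‖
        ≤ C₅ * (4 * p + 2 * q) * ‖x‖ := by
  have hr := r2_le x
  have hx0 := norm_nonneg x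
  constructor
  · rw [abs_mul, abs_of_nonneg (by positivity)]
    calc C₅ * (x 0 ^ 2 + x 1 ^ 2) * |P (emb x)| ≤ C₅ * ‖x‖ ^ 2 * p :=
          mul_le_mul (mul_le_mul_of_nonneg_left hr hC.le) hb1 (abs_nonneg _) (by positivity)
      _ = _ := by ring
  · have hp : ∀ i : Fin 3, HasFDerivAt (fun x : E3 => x i) (EuclideanSpace.proj (𝕜 := ℝ) i) x :=
      fun i => (EuclideanSpace.proj (𝕜 := ℝ) i).hasFDerivAt
    have hpn : ∀ i : Fin 3, ‖(EuclideanSpace.proj (𝕜 := ℝ) i : E3 →L[ℝ] ℝ)‖ ≤ 1 := fun i =>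
      ContinuousLinearMap.opNorm_le_bound _ zero_le_one fun v => by
        rw [one_mul]; exact PiLp.norm_apply_le v i
    have e2 : ∀ i : Fin 3, ‖((2:ℕ) • x i ^ (2 - 1)) • (EuclideanSpace.proj (𝕜 := ℝ) i : E3 →L[ℝ] ℝ)‖
        ≤ 2 * ‖x‖ := by
      intro i
      rw [norm_smul]
      have h1 : ‖(2:ℕ) • x i ^ (2 - 1)‖ = 2 * |x i| := by simp
      rw [h1]
      nlinarith [hpn i, coord_le x i, abs_nonneg (x i)]
    have h1 := (((hp 0).pow 2).add ((hp 1).pow 2)).const_mul C₅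
    have h2 : HasFDerivAt (fun x => P (emb x)) ((G (emb x)).comp embL.toContinuousLinearMap) x :=
      hG.comp x embL.toContinuousLinearMap.hasFDerivAt
    have hb3 : ‖(G (emb x)).comp embL.toContinuousLinearMap‖ ≤ q := by
      refine (ContinuousLinearMap.opNorm_comp_le _ _).trans ?_
      nlinarith [embL.norm_toContinuousLinearMap_le, norm_nonneg (G (emb x))]
    have e3 := (norm_add_le _ _).trans (add_le_add (e2 0) (e2 1))
    generalize (G (emb x)).comp embL.toContinuousLinearMap = D2 at h2 hb3
    generalize hD : ((2:ℕ) • x 0 ^ (2 - 1)) • (EuclideanSpace.proj (𝕜 := ℝ) 0 : E3 →L[ℝ] ℝ) +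
      ((2:ℕ) • x 1 ^ (2 - 1)) • (EuclideanSpace.proj (𝕜 := ℝ) 1 : E3 →L[ℝ] ℝ) = D1 at e3 h1
    have h4 : HasFDerivAt (fun x => C₅ * (x 0 ^ 2 + x 1 ^ 2) * P (emb x))
      ((C₅ * (x 0 ^ 2 + x 1 ^ 2)) • D2 + P (emb x) • (C₅ • D1)) x := h1.mul h2
    rw [h4.fderiv]
    refine (norm_add_le _ _).trans ?_
    rw [norm_smul, norm_smul, norm_smul, Real.norm_of_nonneg hC.le]
    have e1 : ‖C₅ * (x 0 ^ 2 + x 1 ^ 2)‖ ≤ C₅ * (2 * ‖x‖) := by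
      rw [Real.norm_of_nonneg (by positivity)]
      apply mul_le_mul_of_nonneg_left _ hC.le
      nlinarith
    calc _ ≤ C₅ * (2 * ‖x‖) * q + p * (C₅ * (2 * ‖x‖ + 2 * ‖x‖)) := by
          apply add_le_add
          · exact mul_le_mul e1 hb3 (norm_nonneg _) (by positivity)
          · refine mul_le_mul hb1 ?_ (by positivity) (by positivity)
            exact mul_le_mul_of_nonneg_left e3 hC.le
      _ = _ := by ring

lemma linv_reg {C₅ : ℝ} (hC : 0 < C₅) (f : E3 → ℝ) (A : ℝ) (hA : ∀ z, |f z| ≤ A)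
    (hs : ∀ z, 2 < ‖z‖ → f z = 0) :
    ContDiffOn ℝ 1 (Linv C₅ f) (ball 0 2) ∧ ∀ x ∈ ball (0:E3) 2,
      |Linv C₅ f x| ≤ C₅ * (A * J3) * ‖x‖ ^ 2 ∧
      ‖fderiv ℝ (Linv C₅ f) x‖ ≤ C₅ * (4 * (A * J3) + 2 * (A * J4)) * ‖x‖ := by
  have hA0 : 0 ≤ A := (abs_nonneg _).trans (hA 0)
  obtain ⟨G, hGc, hG0⟩ := pot (tilde f) A (fun y => hA _) (fun y hy => by
    apply hs
    convert hy using 1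
    rw [← sq_eq_sq₀ (norm_nonneg _) (norm_nonneg _), nsq3, nsq5, mk3_0, mk3_1, mk3_2,
      Real.sq_sqrt (by positivity)]
    ring)
  obtain ⟨P, hP⟩ : ∃ P : E5 → ℝ, P = fun X => ∫ y : E5, (‖X - y‖ ^ 3)⁻¹ * tilde f y := ⟨_, rfl⟩
  have hG' : ∀ X ∈ ball (0:E5) 2, HasFDerivAt P (G X) X ∧ |P X| ≤ A * J3 ∧ ‖G X‖ ≤ A * J4 := by
    rw [hP]; exact hG0
  have hL : Linv C₅ f = fun x => C₅ * (x 0 ^ 2 + x 1 ^ 2) * P (emb x) := by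
    rw [hP]; rfl
  rw [hL]
  have hmem : ∀ x ∈ ball (0:E3) 2, emb x ∈ ball (0:E5) 2 := by
    intro x hx; rw [mem_ball_zero_iff] at *; rwa [emb_norm]
  have hPG : ContDiffOn ℝ 1 P (ball 0 2) := c1_of isOpen_ball (fun X hX => (hG' X hX).1) hGc
  have hemb : ContDiff ℝ 1 emb := embL.toContinuousLinearMap.contDiff
  have hPe : ContDiffOn ℝ 1 (fun x => P (emb x)) (ball 0 2) :=
    hPG.comp hemb.contDiffOn hmem
  have hcoord : ∀ i : Fin 3, ContDiff ℝ 1 (fun x : E3 => x i) := fun i =>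
    (EuclideanSpace.proj (𝕜 := ℝ) i).contDiff
  have ha : ContDiff ℝ 1 (fun x : E3 => C₅ * (x 0 ^ 2 + x 1 ^ 2)) :=
    contDiff_const.mul (((hcoord 0).pow 2).add ((hcoord 1).pow 2))
  refine ⟨ha.contDiffOn.mul hPe, fun x hx => ?_⟩
  obtain ⟨a1, a2, a3⟩ := hG' _ (hmem x hx)
  exact linv_reg_aux hC _ _ (mul_nonneg hA0 J3_nn) (mul_nonneg hA0 J4_nn) P G x
    (mem_ball_zero_iff.1 hx) a1 a2 a3

lemma pot_inv (R : E5 ≃ₗᵢ[ℝ] E5) {h : E5 → ℝ} (hR : ∀ y, h (R y) = h y) (X : E5) :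
    ∫ y : E5, (‖R X - y‖ ^ 3)⁻¹ * h y = ∫ y : E5, (‖X - y‖ ^ 3)⁻¹ * h y := by
  rw [← R.measurePreserving.integral_comp R.toHomeomorph.measurableEmbedding]
  congr 1
  funext y
  rw [hR, ← map_sub, R.norm_map]

lemma refl_apply (u y : E5) : (ℝ ∙ u)ᗮ.reflection y = y - (2 * (inner ℝ u y / ‖u‖ ^ 2)) • u := by
  rw [Submodule.reflection_orthogonal]
  simp only [LinearIsometryEquiv.trans_apply, Submodule.reflection_singleton_apply,
    LinearIsometryEquiv.coe_neg]
  simp [two_smul, two_mul, add_smul]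

lemma tilde_eq (f : E3 → ℝ) (y : E5) :
    tilde f y = f (mk3 (√(‖y‖ ^ 2 - y 4 ^ 2)) 0 (y 4)) := by
  unfold tilde
  rw [nsq5]; congr 3; ring

lemma Linv_axi (C₅ : ℝ) (f : E3 → ℝ) {x x' : E3} (h : x 0 ^ 2 + x 1 ^ 2 = x' 0 ^ 2 + x' 1 ^ 2)
    (h2 : x 2 = x' 2) : Linv C₅ f x = Linv C₅ f x' := by
  unfold Linv
  rw [h]
  congr 1
  have hn : ‖emb x'‖ = ‖emb x‖ := by
    rw [emb_norm, emb_norm, ← sq_eq_sq₀ (norm_nonneg _) (norm_nonneg _), nsq3, nsq3, h, h2]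
  have hr := Submodule.reflection_sub hn
  rw [← hr]
  apply pot_inv
  intro y
  rw [tilde_eq, tilde_eq, LinearIsometryEquiv.norm_map]
  have : ((ℝ ∙ (emb x' - emb x))ᗮ.reflection y) 4 = y 4 := by
    rw [refl_apply]
    simp [emb_4, h2]
  rw [this]

lemma Linv_even (C₅ : ℝ) {f : E3 → ℝ} (hf : ∀ z, f (reflect3 z) = f z) (x : E3) :
    Linv C₅ f (reflect3 x) = Linv C₅ f x := by
  by_cases h0 : x 2 = 0
  · congr 1
    apply ext3
    · rfl
    · rfl
    · simp [reflect3, mk3_2, h0]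
  unfold Linv
  have e0 : reflect3 x 0 = x 0 := rfl
  have e1 : reflect3 x 1 = x 1 := rfl
  have e2 : reflect3 x 2 = - x 2 := rfl
  rw [e0, e1]
  congr 1
  have hn : ‖emb x‖ = ‖emb (reflect3 x)‖ := by
    rw [emb_norm, emb_norm, ← sq_eq_sq₀ (norm_nonneg _) (norm_nonneg _), nsq3, nsq3, e0, e1, e2]
    ring
  have hr := Submodule.reflection_sub hn
  rw [← hr]
  apply pot_inv
  intro y
  rw [tilde_eq, tilde_eq, LinearIsometryEquiv.norm_map]
  have : ((ℝ ∙ (emb x - emb (reflect3 x)))ᗮ.reflection y) 4 = - y 4 := by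
    rw [refl_apply]
    have hu : ‖emb x - emb (reflect3 x)‖ ^ 2 = 4 * x 2 ^ 2 := by
      rw [nsq5]
      simp [emb_0, emb_1, emb_2, emb_3, emb_4, e0, e1, e2]
      ring
    have hi : inner ℝ (emb x - emb (reflect3 x)) y = 2 * x 2 * y 4 := by
      rw [PiLp.inner_apply, Fin.sum_univ_five]
      simp [emb_0, emb_1, emb_2, emb_3, emb_4, e0, e1, e2]
      ring
    rw [hu, hi]
    simp [emb_4, e2]
    field_simp
    ring
  rw [this, ← hf]
  congr 1
  apply ext3
  · simp [reflect3, mk3_0]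
  · simp [reflect3, mk3_1]
  · simp [reflect3, mk3_2]

lemma comp_reg {Q : E3 → ℝ} {g : E3 → E3} {a b : ℝ} (hb : 0 ≤ b)
    (hQ : ContDiffOn ℝ 1 Q (ball 0 2))
    (hQ1 : ∀ x ∈ ball (0:E3) 2, |Q x| ≤ a * ‖x‖ ^ 2 ∧ ‖fderiv ℝ Q x‖ ≤ b * ‖x‖)
    (hg : ∀ x, x ≠ 0 → ContDiffAt ℝ 1 g x) (hgl : ∀ x y, ‖g y - g x‖ ≤ 2 * ‖y - x‖)
    (hgn : ∀ x, ‖g x‖ ≤ 51 / 50 * ‖x‖) :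
    ContDiffOn ℝ 1 (fun x => Q (g x)) (closedBall 0 1) ∧
      XnormLe (fun x => Q (g x)) (4 * b) := by
  have ha : 0 ≤ a := by
    have h1 : EuclideanSpace.single (0 : Fin 3) (1:ℝ) ∈ ball (0:E3) 2 := by simp
    have := (hQ1 _ h1).1
    simp at this
    exact (abs_nonneg _).trans this
  have hmem : ∀ x ∈ ball (0:E3) (3/2), g x ∈ ball (0:E3) 2 := by
    intro x hx
    rw [mem_ball_zero_iff] at *
    linarith [hgn x]
  have hcd : ∀ x ∈ ball (0:E3) (3/2), x ≠ 0 → ContDiffAt ℝ 1 (fun x => Q (g x)) x := by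
    intro x hx h0
    exact (hQ.contDiffAt (isOpen_ball.mem_nhds (hmem x hx))).comp x (hg x h0)
  have h0 : HasFDerivAt (fun x => Q (g x)) (0 : E3 →L[ℝ] ℝ) 0 := by
    refine Asymptotics.IsBigO.hasFDerivAt (n := 2) ?_ (by norm_num)
    refine Asymptotics.IsBigO.of_bound (4 * a) ?_
    filter_upwards [isOpen_ball.mem_nhds (show (0:E3) ∈ ball (0:E3) (3/2) by simp)] with x hx
    have h1 := (hQ1 _ (hmem x hx)).1
    rw [sub_zero, norm_pow, norm_norm]
    have h2 : ‖g x‖ ≤ 2 * ‖x‖ := by linarith [hgn x, norm_nonneg x]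
    calc _ ≤ a * ‖g x‖ ^ 2 := h1
      _ ≤ a * (2 * ‖x‖) ^ 2 := by gcongr
      _ = _ := by ring
  have hbd : ∀ x ∈ ball (0:E3) (3/2), ‖fderiv ℝ (fun x => Q (g x)) x‖ ≤ 4 * b * ‖x‖ := by
    intro x hx
    by_cases hx0 : x = 0
    · subst hx0; rw [h0.fderiv]; simp
    · have hq := ((hQ.contDiffAt (isOpen_ball.mem_nhds (hmem x hx))).differentiableAt
        (by norm_num)).hasFDerivAt
      have hgd := ((hg x hx0).differentiableAt (by norm_num)).hasFDerivAt
      have hc : HasFDerivAt (fun x => Q (g x)) _ x := hq.comp x hgd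
      rw [hc.fderiv]
      have e1 := (hQ1 _ (hmem x hx)).2
      have e2 : ‖fderiv ℝ g x‖ ≤ 2 := hgd.le_of_lip' (by norm_num)
        (Eventually.of_forall fun y => hgl x y)
      have h2 : ‖g x‖ ≤ 2 * ‖x‖ := by linarith [hgn x, norm_nonneg x]
      calc _ ≤ _ := ContinuousLinearMap.opNorm_comp_le _ _
        _ ≤ (b * (2 * ‖x‖)) * 2 :=
          mul_le_mul (e1.trans (mul_le_mul_of_nonneg_left h2 hb)) e2 (norm_nonneg _) (by positivity)
        _ = _ := by ring
  have hC1 : ContDiffOn ℝ 1 (fun x => Q (g x)) (ball 0 (3/2)) := by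
    refine c1_of isOpen_ball (f' := fderiv ℝ (fun x => Q (g x))) ?_ ?_
    · intro x hx
      by_cases hx0 : x = 0
      · subst hx0; rw [h0.fderiv]; exact h0
      · exact ((hcd x hx hx0).differentiableAt (by norm_num)).hasFDerivAt
    · intro x hx
      apply ContinuousAt.continuousWithinAt
      by_cases hx0 : x = 0
      · subst hx0
        unfold ContinuousAt
        rw [h0.fderiv]
        have hl : Tendsto (fun x : E3 => 4 * b * ‖x‖) (𝓝 0) (𝓝 0) := by
          have : Continuous (fun x : E3 => 4 * b * ‖x‖) := by fun_prop
          simpa using this.tendsto 0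
        refine squeeze_zero_norm' ?_ hl
        filter_upwards [isOpen_ball.mem_nhds hx] with y hy using hbd y hy
      · have := (hcd x hx hx0).fderiv_right (m := 0) (by norm_num)
        exact this.continuousAt
  have hsub : closedBall (0:E3) 1 ⊆ ball 0 (3/2) := closedBall_subset_ball (by norm_num)
  refine ⟨hC1.mono hsub, fun x hx => ?_⟩
  have hu : UniqueDiffWithinAt ℝ (closedBall (0:E3) 1) x :=
    uniqueDiffOn_convex (convex_closedBall _ _) (by simp [interior_closedBall]) x hx
  have hd : DifferentiableAt ℝ (fun x => Q (g x)) x :=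
    (hC1.contDiffAt (isOpen_ball.mem_nhds (hsub hx))).differentiableAt (by norm_num)
  unfold gradB
  rw [hd.fderivWithin hu]
  exact hbd x (hsub hx)

section gd
variable {ζ : E3 → ℝ}

lemma zeta_lip (hζ : InXext (1/100) ζ) {x y : E3} (h : ‖x‖ ≤ ‖y‖) :
    |ζ y - ζ x| ≤ 1/100 * ‖y‖ * ‖y - x‖ := by
  obtain ⟨h1, -, -, -, h5⟩ := hζ
  refine (convex_closedBall (0:E3) ‖y‖).norm_image_sub_le_of_norm_fderiv_le (𝕜 := ℝ)
    (fun z _ => h1.differentiable (by norm_num) z) (fun z hz => ?_)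
    (mem_closedBall_zero_iff.2 h) (mem_closedBall_zero_iff.2 le_rfl)
  have := mem_closedBall_zero_iff.1 hz
  exact (h5 z).trans (by gcongr)

lemma zeta_bd (hζ : InXext (1/100) ζ) (x : E3) : |ζ x| ≤ 1/100 * ‖x‖ ^ 2 := by
  have := zeta_lip hζ (x := 0) (y := x) (by simp)
  rw [hζ.2.2.2.1] at this
  simp only [sub_zero] at this
  nlinarith

lemma u_lip (hζ : InXext (1/100) ζ) {x y : E3} (h : ‖x‖ ≤ ‖y‖) :
    ‖(ζ y / ‖y‖ ^ 2) • y - (ζ x / ‖x‖ ^ 2) • x‖ ≤ 1/50 * ‖y - x‖ := by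
  by_cases hy : y = 0
  · subst hy
    have : x = 0 := by simpa using h
    subst this; simp
  have hy0 : 0 < ‖y‖ := norm_pos_iff.2 hy
  by_cases hx : x = 0
  · subst hx
    have := zeta_bd hζ y
    simp only [smul_zero, sub_zero]
    rw [norm_smul, norm_div, norm_pow, norm_norm, Real.norm_eq_abs, div_mul_eq_mul_div,
      div_le_iff₀ (by positivity)]
    nlinarith [pow_pos hy0 3]
  have hx0 : 0 < ‖x‖ := norm_pos_iff.2 hx
  have e : (ζ y / ‖y‖ ^ 2) • y - (ζ x / ‖x‖ ^ 2) • x =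
      ((ζ y - ζ x) / ‖y‖ ^ 2) • y + ζ x • ((1 / ‖y‖) ^ 2 • y - (1 / ‖x‖) ^ 2 • x) := by
    rw [smul_sub, smul_smul, smul_smul, ← add_sub_assoc, ← add_smul]
    congr 2 <;> ring
  rw [e]
  have k1 : ‖((ζ y - ζ x) / ‖y‖ ^ 2) • y‖ ≤ 1/100 * ‖y - x‖ := by
    have := zeta_lip hζ h
    rw [norm_smul, norm_div, norm_pow, norm_norm, Real.norm_eq_abs, div_mul_eq_mul_div,
      div_le_iff₀ (by positivity)]
    nlinarith
  have k2 : ‖ζ x • ((1 / ‖y‖) ^ 2 • y - (1 / ‖x‖) ^ 2 • x)‖ ≤ 1/100 * ‖y - x‖ := by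
    have h1 := dist_div_norm_sq_smul hy hx 1
    rw [dist_eq_norm, dist_eq_norm] at h1
    rw [norm_smul, h1, Real.norm_eq_abs]
    have h2 := zeta_bd hζ x
    calc |ζ x| * (1 ^ 2 / (‖y‖ * ‖x‖) * ‖y - x‖)
        ≤ (1/100 * ‖x‖ ^ 2) * (1 ^ 2 / (‖y‖ * ‖x‖) * ‖y - x‖) := by gcongr
      _ = (1/100 * ‖y - x‖) * (‖x‖ / ‖y‖) := by field_simp
      _ ≤ (1/100 * ‖y - x‖) * 1 := by
          gcongr; exact (div_le_one hy0).2 h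
      _ = _ := by ring
  refine (norm_add_le _ _).trans ?_
  linarith

lemma u_lip' (hζ : InXext (1/100) ζ) (x y : E3) :
    ‖gdef ζ y - gdef ζ x - (y - x)‖ ≤ 1/50 * ‖y - x‖ := by
  have e : gdef ζ y - gdef ζ x - (y - x) = (ζ y / ‖y‖ ^ 2) • y - (ζ x / ‖x‖ ^ 2) • x := by
    unfold gdef
    rw [add_smul, add_smul, one_smul, one_smul]; abel
  rw [e]
  rcases le_total ‖x‖ ‖y‖ with h | h
  · exact u_lip hζ h
  · rw [norm_sub_rev, norm_sub_rev y]; exact u_lip hζ h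

lemma gdef_zero : gdef ζ 0 = 0 := by simp [gdef]

lemma g_lip (hζ : InXext (1/100) ζ) (x y : E3) : ‖gdef ζ y - gdef ζ x‖ ≤ 51/50 * ‖y - x‖ := by
  have h1 := u_lip' hζ x y
  have h2 := norm_sub_norm_le (gdef ζ y - gdef ζ x) (y - x)
  linarith

lemma g_bij (hζ : InXext (1/100) ζ) : Function.Bijective (gdef ζ) := by
  have hA : ApproximatesLinearOn (gdef ζ) (ContinuousLinearEquiv.refl ℝ E3 : E3 →L[ℝ] E3) univ
      (1/50 : NNReal) := by
    intro x _ y _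
    have := u_lip' hζ y x
    simpa using this
  have hc : (1/50 : NNReal) < ‖((ContinuousLinearEquiv.refl ℝ E3).symm : E3 →L[ℝ] E3)‖₊⁻¹ := by
    have : ‖((ContinuousLinearEquiv.refl ℝ E3).symm : E3 →L[ℝ] E3)‖₊ = 1 := by
      rw [← NNReal.coe_inj]
      exact ContinuousLinearMap.norm_id
    rw [this, inv_one, ← NNReal.coe_lt_coe]
    norm_num
  refine ⟨?_, hA.surjective (Or.inr hc)⟩
  rw [← injOn_univ]
  exact hA.injOn (Or.inr hc)

lemma g_cd (hζ : InXext (1/100) ζ) (x : E3) (hx : x ≠ 0) : ContDiffAt ℝ 1 (gdef ζ) x := by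
  have h1 : ContDiffAt ℝ 1 ζ x := hζ.1.contDiffAt
  have h2 : ContDiffAt ℝ 1 (fun x : E3 => ‖x‖ ^ 2) x := (contDiff_norm_sq ℝ).contDiffAt
  have hn : ‖x‖ ^ 2 ≠ 0 := by positivity
  exact (contDiffAt_const.add (h1.div h2 hn)).smul contDiffAt_id

lemma refl_norm (x : E3) : ‖reflect3 x‖ = ‖x‖ := by
  rw [← sq_eq_sq₀ (norm_nonneg _) (norm_nonneg _), nsq3, nsq3]
  simp [reflect3, mk3_0, mk3_1, mk3_2]

lemma g_refl (hζ : InXext (1/100) ζ) (x : E3) : gdef ζ (reflect3 x) = reflect3 (gdef ζ x) := by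
  unfold gdef
  rw [hζ.2.2.1, refl_norm]
  apply ext3 <;> simp [reflect3, mk3_0, mk3_1, mk3_2]

lemma ginv_refl (hζ : InXext (1/100) ζ) (z : E3) :
    ginv ζ (reflect3 z) = reflect3 (ginv ζ z) := by
  obtain ⟨w, rfl⟩ := (g_bij hζ).2 z
  rw [← g_refl hζ]
  unfold ginv
  rw [Function.leftInverse_invFun (g_bij hζ).1, Function.leftInverse_invFun (g_bij hζ).1]

end gd

lemma X_bd {η : E3 → ℝ} {N : ℝ} (h : InX η) (hN : XnormLe η N) :
    0 ≤ N ∧ ∀ x ∈ closedBall (0:E3) 1, |η x| ≤ N := by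
  have h0 : 0 ≤ N := by
    have h1 : EuclideanSpace.single (0 : Fin 3) (1:ℝ) ∈ closedBall (0:E3) 1 := by simp
    have := hN _ h1
    simp at this
    exact (norm_nonneg _).trans this
  refine ⟨h0, fun x hx => ?_⟩
  have := (convex_closedBall (0:E3) 1).norm_image_sub_le_of_norm_fderivWithin_le (𝕜 := ℝ)
    (f := η) (C := N) (x := 0) (y := x)
    (h.1.differentiableOn (by norm_num)) (fun z hz => ?_) (by simp) hx
  · rw [h.2.2.2.1, sub_zero, sub_zero] at this
    have h2 := mem_closedBall_zero_iff.1 hx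
    exact this.trans (by nlinarith)
  · have h2 := mem_closedBall_zero_iff.1 hz
    exact (hN z hz).trans (by nlinarith [norm_nonneg z])

lemma core {C₅ : ℝ} (hC : 0 < C₅) {k : ℝ → ℝ} {M K N : ℝ} (hM : 0 < M)
    (hK : ∀ t ∈ Icc (-1:ℝ) 1, |deriv k t| ≤ K)
    {ρ₀ : E3 → ℝ} (hρ : ∀ x, |ρ₀ x| ≤ M) (hρe : EvenZ ρ₀)
    (hρs : Function.support ρ₀ ⊆ closedBall (0:E3) 1) {ζ : E3 → ℝ} (hζ : InXext (1/100) ζ)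
    {φ : E3 → ℝ} (hφ : InX φ) (hφ1 : XnormLe φ (1/100)) {η : E3 → ℝ} (hη : InX η)
    (hN : XnormLe η N) :
    InX (fun x => Linv C₅ (fun z => ρ₀ (ginv ζ z) * deriv k (φ (ginv ζ z)) * η (ginv ζ z))
      (gdef ζ x)) ∧
    XnormLe (fun x => Linv C₅ (fun z => ρ₀ (ginv ζ z) * deriv k (φ (ginv ζ z)) * η (ginv ζ z))
      (gdef ζ x)) (4 * (C₅ * (4 * ((M * K * N) * J3) + 2 * ((M * K * N) * J4)))) := by
  have hK0 : 0 ≤ K := (abs_nonneg _).trans (hK 0 (by simp))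
  obtain ⟨hN0, hηb⟩ := X_bd hη hN
  obtain ⟨-, hφb⟩ := X_bd hφ hφ1
  obtain ⟨f, hf⟩ : ∃ f : E3 → ℝ,
    f = fun z => ρ₀ (ginv ζ z) * deriv k (φ (ginv ζ z)) * η (ginv ζ z) := ⟨_, rfl⟩
  rw [← hf]
  have hgg : ∀ z, gdef ζ (ginv ζ z) = z := Function.rightInverse_invFun (g_bij hζ).2
  have hout : ∀ z, ginv ζ z ∉ closedBall (0:E3) 1 → f z = 0 := by
    intro z hz
    have : ρ₀ (ginv ζ z) = 0 := by
      by_contra h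
      exact hz (hρs h)
    simp [hf, this]
  have hA : ∀ z, |f z| ≤ M * K * N := by
    intro z
    by_cases hz : ginv ζ z ∈ closedBall (0:E3) 1
    · rw [hf]
      simp only [abs_mul]
      have h1 := hφb _ hz
      have h2 := hK (φ (ginv ζ z)) (abs_le.1 (h1.trans (by norm_num)))
      have h3 := hηb _ hz
      have h4 := hρ (ginv ζ z)
      gcongr
    · rw [hout z hz, abs_zero]; positivity
  have hgn : ∀ x, ‖gdef ζ x‖ ≤ 51/50 * ‖x‖ := by
    intro x
    simpa [gdef_zero] using g_lip hζ 0 x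
  have hs : ∀ z, 2 < ‖z‖ → f z = 0 := by
    intro z hz
    apply hout
    intro hc
    have h1 := hgn (ginv ζ z)
    rw [hgg] at h1
    have := mem_closedBall_zero_iff.1 hc
    linarith
  obtain ⟨r1, r2⟩ := linv_reg hC f _ hA hs
  have hJ3 := J3_nn
  have hJ4 := J4_nn
  have hcr := comp_reg (g := gdef ζ) (by positivity) r1 r2 (g_cd hζ)
    (fun x y => (g_lip hζ x y).trans (by nlinarith [norm_nonneg (y - x)])) hgn
  have hfe : ∀ z, f (reflect3 z) = f z := by
    intro z
    by_cases hz : ginv ζ z ∈ closedBall (0:E3) 1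
    · rw [hf]
      simp only [ginv_refl hζ]
      rw [hρe, hφ.2.2.1 _ hz, hη.2.2.1 _ hz]
    · rw [hout z hz, hout]
      rw [ginv_refl hζ]
      simpa [refl_norm] using hz
  refine ⟨⟨hcr.1, ⟨fun r t => Linv C₅ f (gdef ζ (mk3 r 0 t)), ?_⟩, ?_, ?_, ⟨_, hcr.2⟩⟩, hcr.2⟩
  · intro x _
    obtain ⟨Z, hZ⟩ := hζ.2.1
    have hc0 : 0 ≤ x 0 ^ 2 + x 1 ^ 2 := by positivity
    have e1 : cylRad (mk3 (cylRad x) 0 (x 2)) = cylRad x := by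
      unfold cylRad
      rw [mk3_0, mk3_1, Real.sq_sqrt hc0]; simp
    have e2 : ζ (mk3 (cylRad x) 0 (x 2)) = ζ x := by
      rw [hZ, hZ x, e1, mk3_2]
    have e4 : cylRad x ^ 2 = x 0 ^ 2 + x 1 ^ 2 := Real.sq_sqrt hc0
    have e3 : ‖mk3 (cylRad x) 0 (x 2)‖ ^ 2 = ‖x‖ ^ 2 := by
      rw [nsq3, nsq3, mk3_0, mk3_1, mk3_2, e4]; ring
    apply Linv_axi
    · unfold gdef
      rw [e2, e3]
      simp only [PiLp.smul_apply, smul_eq_mul, mk3_0, mk3_1, mul_pow, e4]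
      ring
    · unfold gdef
      rw [e2, e3]
      simp [mk3_2]
  · intro x _
    simp only
    rw [g_refl hζ, Linv_even C₅ hfe]
  · simp [gdef_zero, Linv]

/-- for δ sufficiently small, ζ, φ ∈ X_δ, ρ₀ bounded measurable
axisymmetric even in x₃ and supported in B̄₁, and k ∈ C²(ℝ), the linear map
(Tη)(x) = L⁻¹[(ρ₀∘g_ζ⁻¹)(k'∘φ∘g_ζ⁻¹)(η∘g_ζ⁻¹)](g_ζ(x)) is well defined and bounded
on X: Tη ∈ X and ‖Tη‖_X ≤ C‖η‖_X for a constant C depending only on ‖ρ₀‖_{L∞}, k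
and δ. -/
theorem dF3_dphi_bounded_on_X :
    ∃ δ : ℝ, 0 < δ ∧
      ∀ C₅ : ℝ, 0 < C₅ →
        ∀ k : ℝ → ℝ, ContDiff ℝ 2 k →
          ∀ M : ℝ, 0 < M →
            ∃ C : ℝ, 0 < C ∧
              ∀ ρ₀ : E3 → ℝ, Measurable ρ₀ → (∀ x, |ρ₀ x| ≤ M) →
                Axisym ρ₀ → EvenZ ρ₀ → Function.support ρ₀ ⊆ closedBall (0:E3) 1 →
                ∀ ζ : E3 → ℝ, InXext δ ζ →
                  ∀ φ : E3 → ℝ, InX φ → XnormLe φ δ →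
                    ∀ η : E3 → ℝ, InX η →
                      InX (fun x => Linv C₅
                            (fun z => ρ₀ (ginv ζ z) * deriv k (φ (ginv ζ z))
                              * η (ginv ζ z)) (gdef ζ x)) ∧
                      ∀ N : ℝ, XnormLe η N →
                        XnormLe (fun x => Linv C₅
                            (fun z => ρ₀ (ginv ζ z) * deriv k (φ (ginv ζ z))
                              * η (ginv ζ z)) (gdef ζ x)) (C * N) := by
  refine ⟨1/100, by norm_num, ?_⟩
  intro C₅ hC k hk M hM
  have hkc : Continuous (deriv k) := hk.continuous_deriv (by norm_num)
  obtain ⟨K, hK⟩ := isCompact_Icc.exists_bound_of_continuousOn (s := Icc (-1:ℝ) 1) hkc.continuousOn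
  have hK0 : 0 ≤ K := (norm_nonneg _).trans (hK 0 (by simp))
  have hJ3 := J3_nn
  have hJ4 := J4_nn
  refine ⟨4 * (C₅ * (4 * ((M * K) * J3) + 2 * ((M * K) * J4))) + 1, by positivity, ?_⟩
  intro ρ₀ _ hρ _ hρe hρs ζ hζ φ hφ hφ1 η hη
  refine ⟨?_, ?_⟩
  · obtain ⟨N, hN⟩ := hη.2.2.2.2
    exact (core hC hM hK hρ hρe hρs hζ hφ hφ1 hη hN).1
  · intro N hN x hx
    refine ((core hC hM hK hρ hρe hρs hζ hφ hφ1 hη hN).2 x hx).trans ?_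
    have hN0 := (X_bd hη hN).1
    apply mul_le_mul_of_nonneg_right _ (norm_nonneg x)
    nlinarith
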